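/- Let I ⊆ [0,1] be an interval of positive length |I| and let δ > 0. Define L_I(ε) = (1/|I|) · 2√ε · Σ_{q ≥ 1, q² ≤ 1/ε} Σ_{a : a/q ∈ I, gcd(a,q)=1} √(1/q² − ε). Then there is a constant C(δ) depending only on δ such that for all 0 < ε ≤ 1/2 one has |L_I(ε) − 3/π| ≤ C(δ)·|I|⁻¹·ε^{1/2−δ}. -/

import Mathlib

open MeasureTheory

/-- `S_I ε = 2√ε · Σ_{q ≥ 1, q² ≤ 1/ε} Σ_{a : a/q ∈ I, gcd(a,q)=1} √(1/q² − ε)`. -/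
noncomputable def SI (I : Set ℝ) (ε : ℝ) : ℝ :=
  2 * Real.sqrt ε *
    ∑' q : ℕ, if 1 ≤ q ∧ (q : ℝ) ^ 2 ≤ 1 / ε then
      ({a : ℤ | (a : ℝ) / q ∈ I ∧ Int.gcd a q = 1}.ncard : ℝ) *
        Real.sqrt (1 / (q : ℝ) ^ 2 - ε) else 0

/-- `L_I ε = S_I ε / |I|`, the proportion of the horizontal segment at height `ε` over the
interval `I` lying inside Ford disks. -/
noncomputable def LI (I : Set ℝ) (ε : ℝ) : ℝ := SI I ε / (volume I).toReal

/-!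
The number of fractions `b / n` in `I` is `|I| n + O(1)`. Each of them has a unique reduced form,
whose denominator divides `n`, so Möbius inversion expresses the number of reduced fractions of
denominator `q` through these counts, and

  `S_I ε = 2√ε ∑_d μ(d) ∑_m (|I| m + O(1)) √(1/(dm)² - ε)`.

The linear part of the inner sum is `1/d` times a Riemann sum of the quarter circle
`x ↦ √(1 - (√ε d x)²)`, hence equals `|I| π/(4√ε d²) + O(|I|/d)`, and since `√(1/(dm)² - ε)` is at
most `1/(dm)` the `O(1)` part contributes `O(H_N / d)`, where `N = ⌈1/√ε⌉` bounds all denominators.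
As `∑ μ(d)/d² = 6/π²`, the main term is `3|I|/π`, and the error is `O((1 + |I|) √ε H_N²)`,
where `H_N = O_δ(ε^(-δ/2))`.
-/

open Real ArithmeticFunction

section Intervals

theorem exists_Ioo_subset_subset_Icc_of_ordConnected {I : Set ℝ} (hI : I.OrdConnected)
    (hvol : 0 < (volume I).toReal) : ∃ s t : ℝ, Set.Ioo s t ⊆ I ∧ I ⊆ Set.Icc s t := by
  have hcases := hI.isPreconnected.mem_intervals
  generalize sInf I = s, sSup I = t at hcases
  rcases hcases with rfl | rfl | rfl | rfl | hempty_or_unbounded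
  · exact ⟨s, t, Set.Ioo_subset_Icc_self, subset_rfl⟩
  · exact ⟨s, t, Set.Ioo_subset_Ico_self, Set.Ico_subset_Icc_self⟩
  · exact ⟨s, t, Set.Ioo_subset_Ioc_self, Set.Ioc_subset_Icc_self⟩
  · exact ⟨s, t, subset_rfl, Set.Ioo_subset_Icc_self⟩
  · rcases hempty_or_unbounded with rfl | rfl | rfl | rfl | rfl | rfl <;> simp at hvol

theorem volume_eq_ofReal_sub_of_Ioo_subset_subset_Icc {I : Set ℝ} {s t : ℝ}
    (hIoo : Set.Ioo s t ⊆ I) (hIcc : I ⊆ Set.Icc s t) : volume I = ENNReal.ofReal (t - s) :=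
  le_antisymm ((measure_mono hIcc).trans_eq volume_Icc)
    (volume_Ioo.symm.trans_le (measure_mono hIoo))

end Intervals

section Fractions

/-- The number of fractions `b / n` in `I`, in lowest terms or not. -/
noncomputable def fractionCount (I : Set ℝ) (n : ℕ) : ℕ :=
  {b : ℤ | (b : ℝ) / n ∈ I}.ncard

/-- The number of fractions in `I` whose denominator in lowest terms is `q`, i.e. of Ford circles
of radius `1 / (2 * q ^ 2)` tangent to the `x`-axis at a point of `I`. -/
noncomputable def reducedFractionCount (I : Set ℝ) (q : ℕ) : ℕ :=
  {a : ℤ | (a : ℝ) / q ∈ I ∧ Int.gcd a q = 1}.ncard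

theorem finite_setOf_div_mem {I : Set ℝ} (hI : Bornology.IsBounded I) {n : ℕ} (hn : 0 < n) :
    {b : ℤ | (b : ℝ) / n ∈ I}.Finite := by
  have hn' : (0 : ℝ) < n := by exact_mod_cast hn
  refine (Set.finite_Icc ⌈sInf I * n⌉ ⌊sSup I * n⌋).subset fun b hb ↦ ?_
  have hmem := hI.subset_Icc_sInf_sSup hb
  rwa [Set.mem_Icc, le_div_iff₀ hn', div_le_iff₀ hn', ← Int.ceil_le, ← Int.le_floor] at hmem

theorem le_fractionCount {I : Set ℝ} (hI : Bornology.IsBounded I) {s t : ℝ}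
    (hIoo : Set.Ioo s t ⊆ I) {n : ℕ} (hn : 0 < n) :
    (t - s) * n - 1 ≤ fractionCount I n := by
  have hn' : (0 : ℝ) < n := by exact_mod_cast hn
  have hsub : ((Finset.Ioo ⌊s * n⌋ ⌈t * n⌉ : Finset ℤ) : Set ℤ) ⊆ {b : ℤ | (b : ℝ) / n ∈ I} := by
    intro b hb
    rw [Finset.mem_coe, Finset.mem_Ioo, Int.floor_lt, Int.lt_ceil] at hb
    exact hIoo ⟨(lt_div_iff₀ hn').2 hb.1, (div_lt_iff₀ hn').2 hb.2⟩
  have hcard := Set.ncard_le_ncard hsub (finite_setOf_div_mem hI hn)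
  rw [Set.ncard_coe_finset, Int.card_Ioo, ← fractionCount] at hcard
  have hcount : ((⌈t * n⌉ - ⌊s * n⌋ - 1 : ℤ) : ℝ) ≤ fractionCount I n := by
    exact_mod_cast (Int.self_le_toNat _).trans (Int.ofNat_le.2 hcard)
  push_cast at hcount
  linarith [Int.floor_le (s * n), Int.le_ceil (t * n)]

theorem fractionCount_le {I : Set ℝ} {s t : ℝ} (hst : s ≤ t) (hIcc : I ⊆ Set.Icc s t)
    {n : ℕ} (hn : 0 < n) :
    (fractionCount I n : ℝ) ≤ (t - s) * n + 1 := by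
  have hn' : (0 : ℝ) < n := by exact_mod_cast hn
  have hsub : {b : ℤ | (b : ℝ) / n ∈ I} ⊆ (Finset.Icc ⌈s * n⌉ ⌊t * n⌋ : Finset ℤ) := by
    intro b hb
    have hmem := hIcc hb
    rwa [Set.mem_Icc, le_div_iff₀ hn', div_le_iff₀ hn', ← Int.ceil_le, ← Int.le_floor,
      ← Finset.mem_Icc] at hmem
  have hcard := Set.ncard_le_ncard hsub (Finset.finite_toSet _)
  rw [Set.ncard_coe_finset, Int.card_Icc, ← fractionCount] at hcard
  have hlen : ((⌊t * n⌋ + 1 - ⌈s * n⌉ : ℤ) : ℝ) ≤ (t - s) * n + 1 := by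
    push_cast
    linarith [Int.floor_le (t * n), Int.le_ceil (s * n)]
  have hnonneg : 0 ≤ (t - s) * n + 1 := by have := sub_nonneg.2 hst; positivity
  calc (fractionCount I n : ℝ) ≤ ((⌊t * n⌋ + 1 - ⌈s * n⌉).toNat : ℤ) := by exact_mod_cast hcard
    _ ≤ (t - s) * n + 1 := by
      rw [Int.toNat_eq_max]
      push_cast [Int.cast_max] at hlen ⊢
      exact max_le hlen hnonneg

theorem abs_fractionCount_sub_le {I : Set ℝ} {s t : ℝ} (hst : s ≤ t) (hIoo : Set.Ioo s t ⊆ I)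
    (hIcc : I ⊆ Set.Icc s t) {n : ℕ} (hn : 0 < n) :
    |(fractionCount I n : ℝ) - (t - s) * n| ≤ 1 := by
  have hlower := le_fractionCount ((Metric.isBounded_Icc s t).subset hIcc) hIoo hn
  have hupper := fractionCount_le hst hIcc hn
  rw [abs_le]
  constructor <;> linarith

theorem mem_range_intCast_div_of_den_dvd {r : ℚ} {n : ℕ} (hn : n ≠ 0) (hr : r.den ∣ n) :
    r ∈ Set.range fun b : ℤ ↦ (b : ℚ) / n := by
  obtain ⟨k, rfl⟩ := hr
  have hk : (k : ℚ) ≠ 0 := by exact_mod_cast right_ne_zero_of_mul hn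
  refine ⟨r.num * k, ?_⟩
  push_cast
  rw [mul_div_mul_right _ _ hk, r.num_div_den]

theorem ncard_setOf_intCast_div_mem {n : ℕ} (hn : n ≠ 0) {P : Set ℚ} (hP : ∀ r ∈ P, r.den ∣ n) :
    {b : ℤ | (b : ℚ) / n ∈ P}.ncard = P.ncard := by
  have hn' : (n : ℚ) ≠ 0 := by exact_mod_cast hn
  exact Set.ncard_preimage_of_injective_subset_range
    (fun a b hab ↦ Int.cast_injective ((div_left_inj' hn').1 hab))
    fun r hr ↦ mem_range_intCast_div_of_den_dvd hn (hP r hr)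

theorem den_intCast_div_dvd (b : ℤ) (n : ℕ) : ((b : ℚ) / n).den ∣ n := by
  exact_mod_cast Rat.divInt_eq_div b n ▸ Rat.den_dvd b n

theorem den_intCast_div_eq_iff {n : ℕ} (hn : 0 < n) (a : ℤ) :
    ((a : ℚ) / n).den = n ↔ Int.gcd a n = 1 := by
  rw [← Int.cast_natCast (R := ℚ), ← Rat.divInt_eq_div, Rat.den_divInt]
  simp [hn.ne', Nat.div_eq_self, Int.gcd_comm a]

theorem fractionCount_eq_ncard_rat (I : Set ℝ) {n : ℕ} (hn : 0 < n) :
    fractionCount I n = {r : ℚ | (r : ℝ) ∈ I ∧ r.den ∣ n}.ncard := by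
  rw [← ncard_setOf_intCast_div_mem hn.ne' (fun r hr ↦ hr.2), fractionCount]
  simp [den_intCast_div_dvd]

theorem reducedFractionCount_eq_ncard_rat (I : Set ℝ) {q : ℕ} (hq : 0 < q) :
    reducedFractionCount I q = {r : ℚ | (r : ℝ) ∈ I ∧ r.den = q}.ncard := by
  rw [← ncard_setOf_intCast_div_mem hq.ne' (fun r hr ↦ hr.2.dvd), reducedFractionCount]
  simp [den_intCast_div_eq_iff hq]

theorem finite_setOf_mem_and_den_dvd {I : Set ℝ} (hI : Bornology.IsBounded I) {n : ℕ}
    (hn : 0 < n) : {r : ℚ | (r : ℝ) ∈ I ∧ r.den ∣ n}.Finite := by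
  refine ((finite_setOf_div_mem hI hn).image fun b : ℤ ↦ (b : ℚ) / n).subset ?_
  rintro r ⟨hrI, hr⟩
  obtain ⟨b, rfl⟩ := mem_range_intCast_div_of_den_dvd hn.ne' hr
  exact ⟨b, by simpa using hrI, rfl⟩

theorem sum_divisors_reducedFractionCount {I : Set ℝ} (hI : Bornology.IsBounded I) {n : ℕ}
    (hn : 0 < n) : ∑ q ∈ n.divisors, reducedFractionCount I q = fractionCount I n := by
  have hfin := finite_setOf_mem_and_den_dvd hI hn
  rw [fractionCount_eq_ncard_rat I hn, Set.ncard_eq_toFinset_card _ hfin,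
    Finset.card_eq_sum_card_fiberwise (f := Rat.den) (t := n.divisors)
      fun r hr ↦ by simpa [hn.ne'] using ((hfin.mem_toFinset).1 hr).2]
  refine Finset.sum_congr rfl fun q hq ↦ ?_
  rw [reducedFractionCount_eq_ncard_rat I (Nat.pos_of_mem_divisors hq), ← Set.ncard_coe_finset]
  congr 1
  ext r
  simp only [Set.mem_ofPred_eq, Finset.coe_filter, Set.Finite.mem_toFinset]
  exact ⟨fun hr ↦ ⟨⟨hr.1, hr.2 ▸ Nat.dvd_of_mem_divisors hq⟩, hr.2⟩, fun hr ↦ ⟨hr.1.1, hr.2⟩⟩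

theorem reducedFractionCount_eq_sum_moebius {I : Set ℝ} (hI : Bornology.IsBounded I) {q : ℕ}
    (hq : 0 < q) :
    (reducedFractionCount I q : ℝ) = ∑ x ∈ q.divisorsAntidiagonal,
      (moebius x.1 : ℝ) * fractionCount I x.2 := by
  refine (sum_eq_iff_sum_mul_moebius_eq
    (f := fun q ↦ (reducedFractionCount I q : ℝ)) (g := fun n ↦ (fractionCount I n : ℝ)) |>.1
      (fun n hn ↦ ?_) q hq).symm
  exact_mod_cast sum_divisors_reducedFractionCount hI hn

end Fractions

section Moebius

theorem hasSum_moebius_div_sq :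
    HasSum (fun d : ℕ ↦ (moebius d : ℝ) / (d : ℝ) ^ 2) (6 / π ^ 2) := by
  have htwo : (1 : ℝ) < (2 : ℂ).re := by norm_num
  have hsum := (LSeriesSummable_moebius_iff.2 htwo).LSeriesHasSum
  have hvalue : LSeries (fun n ↦ ((moebius n : ℤ) : ℂ)) 2 = 6 / (π : ℂ) ^ 2 := by
    rw [eq_inv_of_mul_eq_one_right (LSeries_zeta_mul_Lseries_moebius htwo),
      LSeries_zeta_eq_riemannZeta htwo, riemannZeta_two, inv_div]
  rw [hvalue, LSeriesHasSum] at hsum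
  rw [← Complex.hasSum_ofReal]
  push_cast
  convert hsum using 2 with d
  rcases eq_or_ne d 0 with rfl | hd
  · simp
  · rw [LSeries.term_of_ne_zero hd]
    norm_cast

theorem abs_sum_div_sq_sub_le {a : ℕ → ℝ} (ha : ∀ n, |a n| ≤ 1) {S : ℝ}
    (hS : HasSum (fun n : ℕ ↦ a n / (n : ℝ) ^ 2) S) {N : ℕ} (hN : N ≠ 0) :
    |∑ n ∈ Finset.Ioc 0 N, a n / (n : ℝ) ^ 2 - S| ≤ (N : ℝ)⁻¹ := by
  set b : ℕ → ℝ := fun n ↦ a n / (n : ℝ) ^ 2 with hb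
  have hpartial (M : ℕ) : ∑ n ∈ Finset.range (M + 1), b n = ∑ n ∈ Finset.Ioc 0 M, b n := by
    rw [Nat.range_succ_eq_Icc_zero, ← Finset.sum_Ioc_add_eq_sum_Icc M.zero_le]
    simp [hb]
  have hlim := (hS.tendsto_sum_nat.comp (Filter.tendsto_add_atTop_nat 1)).const_sub
    (∑ n ∈ Finset.Ioc 0 N, b n) |>.abs
  refine le_of_tendsto hlim ?_
  filter_upwards [Filter.eventually_ge_atTop N] with M hM
  rw [Function.comp_apply, hpartial, ← Finset.sum_Ioc_consecutive b N.zero_le hM,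
    sub_add_cancel_left, abs_neg]
  have hterm (n : ℕ) : |b n| ≤ ((n : ℝ) ^ 2)⁻¹ := by
    rw [hb, abs_div, abs_sq, div_eq_mul_inv]
    exact mul_le_of_le_one_left (by positivity) (ha n)
  calc |∑ n ∈ Finset.Ioc N M, b n| ≤ ∑ n ∈ Finset.Ioc N M, |b n| :=
        Finset.abs_sum_le_sum_abs _ _
    _ ≤ ∑ n ∈ Finset.Ioc N M, ((n : ℝ) ^ 2)⁻¹ := Finset.sum_le_sum fun n _ ↦ hterm n
    _ ≤ (N : ℝ)⁻¹ - (M : ℝ)⁻¹ := sum_Ioc_inv_sq_le_sub hN hM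
    _ ≤ (N : ℝ)⁻¹ := sub_le_self _ (by positivity)

theorem abs_moebius_cast_le_one (n : ℕ) : |(moebius n : ℝ)| ≤ 1 := by
  exact_mod_cast abs_moebius_le_one (n := n)

theorem sum_Ioc_sum_divisorsAntidiagonal {M : Type*} [AddCommMonoid M] {f : ℕ → ℕ → M} {N : ℕ}
    (hf : ∀ d m, N < d * m → f d m = 0) :
    ∑ n ∈ Finset.Ioc 0 N, ∑ x ∈ n.divisorsAntidiagonal, f x.1 x.2 =
      ∑ d ∈ Finset.Ioc 0 N, ∑ m ∈ Finset.Ioc 0 N, f d m := by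
  have hfiber : ∀ n ∈ Finset.Ioc 0 N, ∑ x ∈ n.divisorsAntidiagonal, f x.1 x.2 =
      ∑ x ∈ Finset.Ioc 0 N ×ˢ Finset.Ioc 0 N, if x.1 * x.2 = n then f x.1 x.2 else 0 := by
    intro n hn
    rw [Finset.mem_Ioc] at hn
    rw [Nat.divisorsAntidiagonal_eq_prod_filter_of_le hn.1.ne' hn.2, Finset.sum_filter]
  rw [Finset.sum_congr rfl hfiber, Finset.sum_comm, ← Finset.sum_product' _ _ f]
  refine Finset.sum_congr rfl fun x hx ↦ ?_
  simp only [Finset.mem_product, Finset.mem_Ioc] at hx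
  rw [Finset.sum_ite_eq, ite_eq_left_iff, Finset.mem_Ioc, not_and, not_le]
  exact fun h ↦ (hf _ _ (h (Nat.mul_pos hx.1.1 hx.2.1))).symm

end Moebius

section Circle

theorem abs_sum_Ioc_sub_integral_le {f : ℝ → ℝ} {a b : ℕ} (hab : a ≤ b)
    (hf : AntitoneOn f (Set.Icc a b)) :
    |∑ m ∈ Finset.Ioc a b, f m - ∫ x in (a : ℝ)..b, f x| ≤ f a - f b := by
  have hupper := hf.sum_le_integral_Ico hab
  have hlower := hf.integral_le_sum_Ico hab
  rw [Finset.sum_Ico_add' (fun m : ℕ ↦ f m), Finset.Ico_add_one_add_one_eq_Ioc] at hupper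
  have hshift := (Finset.sum_Ioc_add_eq_sum_Icc (f := fun m : ℕ ↦ f m) hab).trans
    (Finset.sum_Ico_add_eq_sum_Icc hab).symm
  rw [abs_le]
  constructor <;> linarith

theorem integral_zero_one_sqrt_one_sub_sq : ∫ x in (0 : ℝ)..1, √(1 - x ^ 2) = π / 4 := by
  have hcont : Continuous fun x : ℝ ↦ √(1 - x ^ 2) := by fun_prop
  have hsplit := intervalIntegral.integral_add_adjacent_intervals
    (hcont.intervalIntegrable (μ := volume) (-1) 0) (hcont.intervalIntegrable 0 1)
  have hsymm : ∫ x in (-1 : ℝ)..0, √(1 - x ^ 2) = ∫ x in (0 : ℝ)..1, √(1 - x ^ 2) := by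
    have hneg := intervalIntegral.integral_comp_neg (a := -1) (b := 0) fun x : ℝ ↦ √(1 - x ^ 2)
    simpa only [neg_sq, neg_neg, neg_zero] using hneg
  rw [integral_sqrt_one_sub_sq, hsymm] at hsplit
  linarith

theorem integral_sqrt_one_sub_sq_of_one_le {T : ℝ} (hT : 1 ≤ T) :
    ∫ x in (0 : ℝ)..T, √(1 - x ^ 2) = π / 4 := by
  have hcont : Continuous fun x : ℝ ↦ √(1 - x ^ 2) := by fun_prop
  have htail : ∫ x in (1 : ℝ)..T, √(1 - x ^ 2) = 0 := by
    rw [← intervalIntegral.integral_zero (a := 1) (b := T)]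
    refine intervalIntegral.integral_congr fun x hx ↦ ?_
    rw [Set.uIcc_of_le hT] at hx
    exact sqrt_eq_zero_of_nonpos (sub_nonpos.2 (one_le_pow₀ hx.1))
  rw [← intervalIntegral.integral_add_adjacent_intervals (hcont.intervalIntegrable 0 1)
    (hcont.intervalIntegrable 1 T), integral_zero_one_sqrt_one_sub_sq, htail, add_zero]

theorem abs_sum_sqrt_one_sub_sq_sub_le {c : ℝ} (hc : 0 < c) {N : ℕ} (hN : 1 ≤ c * N) :
    |∑ m ∈ Finset.Ioc 0 N, √(1 - (c * m) ^ 2) - π / (4 * c)| ≤ 1 := by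
  have hanti : AntitoneOn (fun x : ℝ ↦ √(1 - (c * x) ^ 2)) (Set.Icc ((0 : ℕ) : ℝ) N) := by
    intro x hx y _ hxy
    have hx0 : 0 ≤ x := by simpa using hx.1
    dsimp only
    gcongr
  have hint : ∫ x in (0 : ℝ)..N, √(1 - (c * x) ^ 2) = π / (4 * c) := by
    rw [intervalIntegral.integral_comp_mul_left (fun x : ℝ ↦ √(1 - x ^ 2)) hc.ne', mul_zero,
      integral_sqrt_one_sub_sq_of_one_le hN, smul_eq_mul]
    field_simp
  have hcompare := abs_sum_Ioc_sub_integral_le N.zero_le hanti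
  rw [Nat.cast_zero, hint] at hcompare
  refine hcompare.trans ?_
  simp

end Circle

section HalfChord

/-- The half-length, divided by `√ε`, of the chord in which the line of height `ε` meets a Ford
disk of radius `1 / (2 * x ^ 2)`. It is `0` when the line misses the disk, and the denominator `x`
is allowed to be real. -/
noncomputable def fordHalfChord (ε x : ℝ) : ℝ := √(1 / x ^ 2 - ε)

variable {ε : ℝ}

theorem fordHalfChord_nonneg (ε x : ℝ) : 0 ≤ fordHalfChord ε x := sqrt_nonneg _

theorem fordHalfChord_eq_div (hε : 0 ≤ ε) {x : ℝ} (hx : 0 < x) :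
    fordHalfChord ε x = √(1 - (√ε * x) ^ 2) / x := by
  have hscale : 1 / x ^ 2 - ε = (1 - (√ε * x) ^ 2) / x ^ 2 := by
    rw [mul_pow, sq_sqrt hε]
    field_simp
  rw [fordHalfChord, hscale, sqrt_div' _ (sq_nonneg x), sqrt_sq hx.le]

theorem fordHalfChord_eq_zero (hε : 0 ≤ ε) {x : ℝ} (hx : 0 < x) (h : 1 ≤ √ε * x) :
    fordHalfChord ε x = 0 := by
  rw [fordHalfChord_eq_div hε hx, sqrt_eq_zero_of_nonpos (sub_nonpos.2 (one_le_pow₀ h)), zero_div]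

theorem fordHalfChord_le_inv (hε : 0 ≤ ε) {x : ℝ} (hx : 0 < x) : fordHalfChord ε x ≤ x⁻¹ := by
  rw [fordHalfChord_eq_div hε hx, div_eq_mul_inv]
  refine mul_le_of_le_one_left (by positivity) (sqrt_le_one.2 ?_)
  exact sub_le_self 1 (sq_nonneg _)

theorem one_le_sqrt_mul_of_one_div_lt_sq (hε : 0 < ε) {x : ℝ} (hx : 0 < x) (h : 1 / ε < x ^ 2) :
    1 ≤ √ε * x := by
  rw [← one_le_sq_iff₀ (by positivity), mul_pow, sq_sqrt hε.le, mul_comm]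
  exact ((div_lt_iff₀ hε).1 h).le

theorem SI_eq_sum (I : Set ℝ) (hε : 0 < ε) {N : ℕ} (hN : 1 ≤ √ε * N) :
    SI I ε = 2 * √ε * ∑ q ∈ Finset.Ioc 0 N, reducedFractionCount I q * fordHalfChord ε q := by
  have hterm (q : ℕ) (hq : 0 < q) :
      (if 1 ≤ q ∧ (q : ℝ) ^ 2 ≤ 1 / ε then
        ({a : ℤ | (a : ℝ) / q ∈ I ∧ Int.gcd a q = 1}.ncard : ℝ) * √(1 / (q : ℝ) ^ 2 - ε) else 0) =
      reducedFractionCount I q * fordHalfChord ε q := by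
    have hq' : (0 : ℝ) < q := by exact_mod_cast hq
    split_ifs with h
    · rfl
    · have hlarge : 1 / ε < (q : ℝ) ^ 2 := not_le.1 fun hle ↦ h ⟨hq, hle⟩
      rw [fordHalfChord_eq_zero hε.le hq' (one_le_sqrt_mul_of_one_div_lt_sq hε hq' hlarge),
        mul_zero]
  rw [SI, tsum_eq_sum (s := Finset.Ioc 0 N)]
  · rw [Finset.sum_congr rfl fun q hq ↦ hterm q (Finset.mem_Ioc.1 hq).1]
  · intro q hq
    rcases q.eq_zero_or_pos with rfl | hq0
    · simp
    · have hNq : (N : ℝ) ≤ q := by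
        rw [Finset.mem_Ioc] at hq
        exact_mod_cast (by lia : N ≤ q)
      rw [hterm q hq0, fordHalfChord_eq_zero hε.le (by exact_mod_cast hq0) (hN.trans (by gcongr)),
        mul_zero]

theorem SI_eq_sum_moebius {I : Set ℝ} (hI : Bornology.IsBounded I) (hε : 0 < ε) {N : ℕ}
    (hN : 1 ≤ √ε * N) :
    SI I ε = 2 * √ε * ∑ d ∈ Finset.Ioc 0 N, (moebius d : ℝ) *
      ∑ m ∈ Finset.Ioc 0 N, fractionCount I m * fordHalfChord ε (d * m) := by
  have hvanish (d m : ℕ) (hdm : N < d * m) :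
      (moebius d : ℝ) * (fractionCount I m * fordHalfChord ε (d * m)) = 0 := by
    have hdm' : (N : ℝ) < d * m := by exact_mod_cast hdm
    rw [fordHalfChord_eq_zero hε.le (N.cast_nonneg.trans_lt hdm') (hN.trans (by gcongr)),
      mul_zero, mul_zero]
  simp_rw [SI_eq_sum I hε hN, Finset.mul_sum (Finset.Ioc 0 N) _ (moebius _ : ℝ)]
  rw [← sum_Ioc_sum_divisorsAntidiagonal hvanish]
  congr 1
  refine Finset.sum_congr rfl fun q hq ↦ ?_
  rw [reducedFractionCount_eq_sum_moebius hI (Finset.mem_Ioc.1 hq).1, Finset.sum_mul]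
  refine Finset.sum_congr rfl fun x hx ↦ ?_
  rw [← (Nat.mem_divisorsAntidiagonal.1 hx).1, Nat.cast_mul, mul_assoc]

end HalfChord

section ErrorTerm

theorem sum_Ioc_inv_eq_harmonic (N : ℕ) :
    ∑ n ∈ Finset.Ioc 0 N, (n : ℝ)⁻¹ = (harmonic N : ℝ) := by
  rw [harmonic_eq_sum_Icc]
  push_cast
  rfl

theorem one_le_harmonic {N : ℕ} (hN : N ≠ 0) : (1 : ℝ) ≤ harmonic N := by
  rw [← sum_Ioc_inv_eq_harmonic]
  calc (1 : ℝ) = ((1 : ℕ) : ℝ)⁻¹ := by norm_num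
    _ ≤ ∑ n ∈ Finset.Ioc 0 N, (n : ℝ)⁻¹ :=
        Finset.single_le_sum (f := fun n : ℕ ↦ (n : ℝ)⁻¹) (fun n _ ↦ by positivity)
          (Finset.mem_Ioc.2 ⟨one_pos, Nat.one_le_iff_ne_zero.2 hN⟩)

variable {F : ℕ → ℝ} {v ε : ℝ}

theorem sum_mul_fordHalfChord_mul (hε : 0 ≤ ε) {d : ℝ} (hd : 0 < d) (N : ℕ) :
    ∑ m ∈ Finset.Ioc 0 N, m * fordHalfChord ε (d * m) =
      (∑ m ∈ Finset.Ioc 0 N, √(1 - (√ε * d * m) ^ 2)) * d⁻¹ := by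
  rw [Finset.sum_mul]
  refine Finset.sum_congr rfl fun m hm ↦ ?_
  have hm0 : (0 : ℝ) < m := by exact_mod_cast (Finset.mem_Ioc.1 hm).1
  rw [fordHalfChord_eq_div hε (by positivity), ← mul_assoc]
  field_simp

theorem abs_sum_mul_fordHalfChord_mul_sub_le (hε : 0 < ε) {N : ℕ} (hN : 1 ≤ √ε * N) {d : ℝ}
    (hd : 1 ≤ d) :
    |∑ m ∈ Finset.Ioc 0 N, m * fordHalfChord ε (d * m) - π / (4 * √ε) / d ^ 2| ≤ d⁻¹ := by
  have hs : 0 < √ε := sqrt_pos.2 hε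
  have hd0 : 0 < d := zero_lt_one.trans_le hd
  have hcircle := abs_sum_sqrt_one_sub_sq_sub_le (c := √ε * d) (by positivity) (N := N)
    (hN.trans (by gcongr; exact le_mul_of_one_le_right hs.le hd))
  have hmain : π / (4 * √ε) / d ^ 2 = π / (4 * (√ε * d)) * d⁻¹ := by field_simp
  rw [sum_mul_fordHalfChord_mul hε.le hd0, hmain, ← sub_mul, abs_mul,
    abs_of_pos (inv_pos.2 hd0)]
  exact mul_le_of_le_one_left (by positivity) hcircle

theorem abs_sum_mul_fordHalfChord_le {E : ℕ → ℝ} (hE : ∀ m > 0, |E m| ≤ 1) (hε : 0 ≤ ε) {d : ℝ}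
    (hd : 0 < d) (N : ℕ) :
    |∑ m ∈ Finset.Ioc 0 N, E m * fordHalfChord ε (d * m)| ≤ harmonic N * d⁻¹ := by
  rw [← sum_Ioc_inv_eq_harmonic, Finset.sum_mul]
  refine (Finset.abs_sum_le_sum_abs _ _).trans (Finset.sum_le_sum fun m hm ↦ ?_)
  have hm : 0 < m := (Finset.mem_Ioc.1 hm).1
  calc |E m * fordHalfChord ε (d * m)| = |E m| * fordHalfChord ε (d * m) := by
        rw [abs_mul, abs_of_nonneg (fordHalfChord_nonneg _ _)]
    _ ≤ fordHalfChord ε (d * m) := mul_le_of_le_one_left (fordHalfChord_nonneg _ _) (hE m hm)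
    _ ≤ (d * m)⁻¹ := fordHalfChord_le_inv hε (by positivity)
    _ = (m : ℝ)⁻¹ * d⁻¹ := by rw [mul_inv_rev]

theorem abs_sum_mul_fordHalfChord_sub_le (hv : 0 ≤ v) (hF : ∀ m > 0, |F m - v * m| ≤ 1)
    (hε : 0 < ε) {N : ℕ} (hN : 1 ≤ √ε * N) {d : ℝ} (hd : 1 ≤ d) :
    |∑ m ∈ Finset.Ioc 0 N, F m * fordHalfChord ε (d * m) - v * (π / (4 * √ε)) / d ^ 2| ≤
      (v + harmonic N) * d⁻¹ := by
  have hmain := abs_sum_mul_fordHalfChord_mul_sub_le hε hN hd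
  have herror := abs_sum_mul_fordHalfChord_le hF hε.le (zero_lt_one.trans_le hd) N
  have hsplit : ∑ m ∈ Finset.Ioc 0 N, F m * fordHalfChord ε (d * m) - v * (π / (4 * √ε)) / d ^ 2 =
      v * (∑ m ∈ Finset.Ioc 0 N, m * fordHalfChord ε (d * m) - π / (4 * √ε) / d ^ 2) +
        ∑ m ∈ Finset.Ioc 0 N, (F m - v * m) * fordHalfChord ε (d * m) := by
    simp only [sub_mul, Finset.sum_sub_distrib, mul_assoc, ← Finset.mul_sum]
    ring
  rw [hsplit, add_mul]
  refine (abs_add_le _ _).trans (add_le_add ?_ herror)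
  rw [abs_mul, abs_of_nonneg hv]
  gcongr

theorem abs_sum_moebius_mul_sub_le {T : ℕ → ℝ} {A B : ℝ} {N : ℕ}
    (hT : ∀ d ∈ Finset.Ioc 0 N, |T d - A / d ^ 2| ≤ B * (d : ℝ)⁻¹) :
    |∑ d ∈ Finset.Ioc 0 N, (moebius d : ℝ) * T d -
      A * ∑ d ∈ Finset.Ioc 0 N, (moebius d : ℝ) / d ^ 2| ≤ B * harmonic N := by
  rw [Finset.mul_sum, ← Finset.sum_sub_distrib, ← sum_Ioc_inv_eq_harmonic, Finset.mul_sum]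
  refine (Finset.abs_sum_le_sum_abs _ _).trans (Finset.sum_le_sum fun d hd ↦ ?_)
  rw [mul_div_left_comm, ← mul_sub, abs_mul]
  exact (mul_le_of_le_one_left (abs_nonneg _) (abs_moebius_cast_le_one d)).trans (hT d hd)

theorem abs_two_mul_sqrt_mul_sum_sub_le (hv : 0 ≤ v) (hF : ∀ m > 0, |F m - v * m| ≤ 1)
    (hε : 0 < ε) {N : ℕ} (hN : 1 ≤ √ε * N) :
    |2 * √ε * ∑ d ∈ Finset.Ioc 0 N, (moebius d : ℝ) *
      ∑ m ∈ Finset.Ioc 0 N, F m * fordHalfChord ε (d * m) - v * (3 / π)| ≤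
      2 * √ε * ((v + harmonic N) * harmonic N + v) := by
  have hs : 0 < √ε := sqrt_pos.2 hε
  have hN0 : N ≠ 0 := by rintro rfl; norm_num at hN
  have houter := abs_sum_moebius_mul_sub_le (N := N) fun d hd ↦
    abs_sum_mul_fordHalfChord_sub_le hv hF hε hN (by exact_mod_cast (Finset.mem_Ioc.1 hd).1)
  have htail : |∑ d ∈ Finset.Ioc 0 N, (moebius d : ℝ) / d ^ 2 - 6 / π ^ 2| ≤ √ε :=
    (abs_sum_div_sq_sub_le abs_moebius_cast_le_one hasSum_moebius_div_sq hN0).trans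
      (inv_le_of_inv_le₀ hs (by rwa [inv_le_iff_one_le_mul₀' hs]))
  set W := ∑ d ∈ Finset.Ioc 0 N, (moebius d : ℝ) *
    ∑ m ∈ Finset.Ioc 0 N, F m * fordHalfChord ε (d * m)
  set M := ∑ d ∈ Finset.Ioc 0 N, (moebius d : ℝ) / (d : ℝ) ^ 2
  have hsplit : 2 * √ε * W - v * (3 / π) =
      2 * √ε * (W - v * (π / (4 * √ε)) * M) + v * (π / 2) * (M - 6 / π ^ 2) := by
    field_simp
    ring
  calc |2 * √ε * W - v * (3 / π)|
      ≤ 2 * √ε * |W - v * (π / (4 * √ε)) * M| + v * (π / 2) * |M - 6 / π ^ 2| := by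
        rw [hsplit]
        refine (abs_add_le _ _).trans_eq ?_
        rw [abs_mul, abs_mul (v * _), abs_of_pos (by positivity : 0 < 2 * √ε),
          abs_of_nonneg (by positivity : 0 ≤ v * (π / 2))]
    _ ≤ 2 * √ε * ((v + harmonic N) * harmonic N) + v * (4 / 2) * √ε := by
        gcongr
        exact pi_le_four
    _ = 2 * √ε * ((v + harmonic N) * harmonic N + v) := by ring

theorem abs_SI_sub_le {I : Set ℝ} (hI : I.OrdConnected) (hvol : 0 < (volume I).toReal)
    (hε : 0 < ε) {N : ℕ} (hN : 1 ≤ √ε * N) :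
    |SI I ε - (volume I).toReal * (3 / π)| ≤
      2 * (1 + 2 * (volume I).toReal) * (√ε * (harmonic N : ℝ) ^ 2) := by
  obtain ⟨s, t, hIoo, hIcc⟩ := exists_Ioo_subset_subset_Icc_of_ordConnected hI hvol
  have hvolume := volume_eq_ofReal_sub_of_Ioo_subset_subset_Icc hIoo hIcc
  have hst : s < t := by
    rwa [hvolume, ENNReal.toReal_pos_iff, ENNReal.ofReal_pos, sub_pos,
      and_iff_left ENNReal.ofReal_lt_top] at hvol
  have hlen : (volume I).toReal = t - s := by
    rw [hvolume, ENNReal.toReal_ofReal (sub_nonneg.2 hst.le)]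
  have hbdd : Bornology.IsBounded I := (Metric.isBounded_Icc s t).subset hIcc
  have hcount (m : ℕ) (hm : m > 0) : |(fractionCount I m : ℝ) - (volume I).toReal * m| ≤ 1 :=
    hlen ▸ abs_fractionCount_sub_le hst.le hIoo hIcc hm
  have hN0 : N ≠ 0 := by rintro rfl; norm_num at hN
  have hharmonic : (1 : ℝ) ≤ harmonic N := one_le_harmonic hN0
  set v := (volume I).toReal
  rw [SI_eq_sum_moebius hbdd hε hN]
  calc _ ≤ 2 * √ε * ((v + harmonic N) * harmonic N + v) :=
        abs_two_mul_sqrt_mul_sum_sub_le hvol.le hcount hε hN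
    _ ≤ 2 * √ε * ((1 + 2 * v) * (harmonic N : ℝ) ^ 2) := by
        gcongr
        nlinarith [mul_nonneg hvol.le (sub_nonneg.2 hharmonic)]
    _ = 2 * (1 + 2 * v) * (√ε * (harmonic N : ℝ) ^ 2) := by ring

theorem harmonic_le_rpow {N : ℕ} (hN : N ≠ 0) {δ : ℝ} (hδ : 0 < δ) :
    (harmonic N : ℝ) ≤ (1 + 1 / δ) * (N : ℝ) ^ δ := by
  have hN1 : (1 : ℝ) ≤ N := by exact_mod_cast Nat.one_le_iff_ne_zero.2 hN
  calc (harmonic N : ℝ) ≤ 1 + Real.log N := harmonic_le_one_add_log N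
    _ ≤ (N : ℝ) ^ δ + (N : ℝ) ^ δ / δ :=
        add_le_add (one_le_rpow hN1 hδ.le) (log_le_rpow_div N.cast_nonneg hδ)
    _ = (1 + 1 / δ) * (N : ℝ) ^ δ := by ring

theorem sqrt_mul_harmonic_sq_le {δ : ℝ} (hδ : 0 < δ) (hε : 0 < ε) (hε1 : ε ≤ 1) :
    √ε * (harmonic ⌈1 / √ε⌉₊ : ℝ) ^ 2 ≤
      ((1 + 1 / δ) * 2 ^ δ) ^ 2 * ε ^ ((1 : ℝ) / 2 - δ) := by
  have hs : 0 < √ε := sqrt_pos.2 hε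
  have hceil_ne : ⌈1 / √ε⌉₊ ≠ 0 := (Nat.ceil_pos.2 (by positivity)).ne'
  have hceil : (⌈1 / √ε⌉₊ : ℝ) ≤ 2 / √ε := by
    have hone : 1 ≤ 1 / √ε := (one_le_div hs).2 (sqrt_le_one.2 hε1)
    calc (⌈1 / √ε⌉₊ : ℝ) ≤ 1 / √ε + 1 := (Nat.ceil_lt_add_one (by positivity)).le
      _ ≤ 1 / √ε + 1 / √ε := by gcongr
      _ = 2 / √ε := by ring
  have hharmonic : (harmonic ⌈1 / √ε⌉₊ : ℝ) ≤ (1 + 1 / δ) * 2 ^ δ * √ε ^ (-δ) := by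
    calc (harmonic ⌈1 / √ε⌉₊ : ℝ) ≤ (1 + 1 / δ) * (⌈1 / √ε⌉₊ : ℝ) ^ δ :=
          harmonic_le_rpow hceil_ne hδ
      _ ≤ (1 + 1 / δ) * (2 / √ε) ^ δ := by gcongr
      _ = (1 + 1 / δ) * 2 ^ δ * √ε ^ (-δ) := by
          rw [div_rpow zero_le_two hs.le, rpow_neg hs.le, div_eq_mul_inv (2 ^ δ), mul_assoc]
  have hnonneg : (0 : ℝ) ≤ harmonic ⌈1 / √ε⌉₊ := zero_le_one.trans (one_le_harmonic hceil_ne)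
  have hpow : √ε * (√ε ^ (-δ)) ^ 2 = ε ^ ((1 : ℝ) / 2 - δ) := by
    rw [sqrt_eq_rpow, ← rpow_mul hε.le, ← rpow_mul_natCast hε.le, ← rpow_add hε]
    congr 1
    push_cast
    ring
  calc √ε * (harmonic ⌈1 / √ε⌉₊ : ℝ) ^ 2
      ≤ √ε * ((1 + 1 / δ) * 2 ^ δ * √ε ^ (-δ)) ^ 2 := by gcongr
    _ = ((1 + 1 / δ) * 2 ^ δ) ^ 2 * (√ε * (√ε ^ (-δ)) ^ 2) := by ring
    _ = ((1 + 1 / δ) * 2 ^ δ) ^ 2 * ε ^ ((1 : ℝ) / 2 - δ) := by rw [hpow]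

end ErrorTerm

theorem LI_eq_three_div_pi_add_error_general {δ : ℝ} (hδ : 0 < δ) :
    ∃ C : ℝ, 0 < C ∧
      ∀ I : Set ℝ, I.OrdConnected → 0 < (volume I).toReal →
        ∀ ε : ℝ, 0 < ε → ε ≤ 1 →
          |LI I ε - 3 / π| ≤ C * max 1 ((volume I).toReal)⁻¹ * ε ^ ((1 : ℝ) / 2 - δ) := by
  refine ⟨6 * ((1 + 1 / δ) * 2 ^ δ) ^ 2, by positivity, fun I hI hvol ε hε hε1 ↦ ?_⟩
  have hs : 0 < √ε := sqrt_pos.2 hε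
  have hSI := abs_SI_sub_le hI hvol hε (N := ⌈1 / √ε⌉₊) ((div_le_iff₀' hs).1 (Nat.le_ceil _))
  have herror := sqrt_mul_harmonic_sq_le hδ hε hε1
  set v := (volume I).toReal
  have hLI : LI I ε - 3 / π = (SI I ε - v * (3 / π)) * v⁻¹ := by
    rw [LI, sub_mul, mul_right_comm, mul_inv_cancel₀ hvol.ne', one_mul, div_eq_mul_inv]
  have hweight : 2 * (1 + 2 * v) * v⁻¹ ≤ 6 * max 1 v⁻¹ := by
    have hexpand : 2 * (1 + 2 * v) * v⁻¹ = 2 * v⁻¹ + 4 * 1 := by field_simp; ring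
    linarith [le_max_left 1 v⁻¹, le_max_right 1 v⁻¹]
  rw [hLI, abs_mul, abs_of_pos (inv_pos.2 hvol)]
  calc |SI I ε - v * (3 / π)| * v⁻¹
      ≤ 2 * (1 + 2 * v) * (√ε * (harmonic ⌈1 / √ε⌉₊ : ℝ) ^ 2) * v⁻¹ := by gcongr
    _ = 2 * (1 + 2 * v) * v⁻¹ * (√ε * (harmonic ⌈1 / √ε⌉₊ : ℝ) ^ 2) := by ring
    _ ≤ 6 * max 1 v⁻¹ * (((1 + 1 / δ) * 2 ^ δ) ^ 2 * ε ^ ((1 : ℝ) / 2 - δ)) := by gcongr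
    _ = 6 * ((1 + 1 / δ) * 2 ^ δ) ^ 2 * max 1 v⁻¹ * ε ^ ((1 : ℝ) / 2 - δ) := by ring

theorem toReal_volume_le_one_of_subset_Icc {I : Set ℝ} (hI : I ⊆ Set.Icc 0 1) :
    (volume I).toReal ≤ 1 := by
  simpa using ENNReal.toReal_mono (by simp) (measure_mono (μ := volume) hI)

theorem LI_eq_three_div_pi_add_error :
    ∀ δ : ℝ, 0 < δ → ∃ C : ℝ, 0 < C ∧
      ∀ I : Set ℝ, I.OrdConnected → I ⊆ Set.Icc (0 : ℝ) 1 → 0 < (volume I).toReal →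
        ∀ ε : ℝ, 0 < ε → ε ≤ 1 / 2 →
          |LI I ε - 3 / Real.pi| ≤ C * ((volume I).toReal)⁻¹ * ε ^ ((1 : ℝ) / 2 - δ) := by
  intro δ hδ
  obtain ⟨C, hC, hbound⟩ := LI_eq_three_div_pi_add_error_general hδ
  refine ⟨C, hC, fun I hI hI01 hvol ε hε hε2 ↦ ?_⟩
  have hone : 1 ≤ ((volume I).toReal)⁻¹ :=
    (one_le_inv₀ hvol).2 (toReal_volume_le_one_of_subset_Icc hI01)
  simpa only [max_eq_right hone] using hbound I hI hvol ε hε (by linarith)
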